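/- Let D be a non-trivial, non-symmetric 2-(v,k,3) design with 3 dividing r, admitting a flag-transitive, point-primitive automorphism group G that is almost simple with socle X = PSL(2,q), where X acts point-primitively on D with point stabilizer X_α maximal in X. Suppose X_α ≅ A4, with q = p a prime, p ≡ ±3 (mod 8) and p ≢ ±1 (mod 10). Then q = 5 and D is the complete 2-(5,3,3) design, whose blocks are all 3-subsets of a 5-point set (so (v,b,r,k) = (5,10,6,3)). -/

import Mathlib

/-!
As `X` has trivial centralizer, `G` acts faithfully on `X ≅ PSL(2, p)` by conjugation. An
automorphism of `PSL(2, p)` maps the two standard unipotent generators to unipotent elements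
`1 + N` and `1 + M`; the Weyl element being an involution forces `tr (N M) = 1`, so that `N` and `M`
are simultaneously conjugate to the matrix units `E₁₂` and `E₂₁`. Hence every automorphism is
conjugation by an element of `PGL(2, p)`, and `|G : X| ≤ 2`. The stabilizer `G_α` therefore has
order dividing `24`, and by flag-transitivity so does `r`. With `r (k - 1) = 3 (v - 1)`,
`v = p (p² - 1) / 24` and Fisher's inequality `k ≤ r` only `p = 5` survives, and then the design
has as many blocks as a `5`-set has triples.
-/

open scoped Pointwise
open Matrix

namespace FT

variable {Pt : Type*}

/-- `IsDesign 𝓑 k lam` says that the family `𝓑` of subsets of the point set `Pt` is the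
block set of a `2-(v, k, lam)` design: every block has `k` points and any two distinct
points lie on exactly `lam` common blocks. -/
structure IsDesign (𝓑 : Set (Set Pt)) (k lam : ℕ) : Prop where
  block_card : ∀ B ∈ 𝓑, Nat.card B = k
  pair_count : ∀ x y : Pt, x ≠ y → Nat.card {B : Set Pt | B ∈ 𝓑 ∧ x ∈ B ∧ y ∈ B} = lam

/-- The group `G` acts on the design with point set `Pt` and block set `𝓑` as a group of
automorphisms. -/
def ActsOn (G : Type*) [Group G] [MulAction G Pt] (𝓑 : Set (Set Pt)) : Prop :=
  ∀ (g : G), ∀ B ∈ 𝓑, g • B ∈ 𝓑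

/-- The group `G` is transitive on the flags (incident point-block pairs) of the design. -/
def FlagTransitive (G : Type*) [Group G] [MulAction G Pt] (𝓑 : Set (Set Pt)) : Prop :=
  ∀ B ∈ 𝓑, ∀ C ∈ 𝓑, ∀ x ∈ B, ∀ y ∈ C, ∃ g : G, g • B = C ∧ g • x = y

/-- The action of `G` on `Pt` is primitive: it is transitive and every block of
imprimitivity is trivial. -/
def PointPrimitive (G : Type*) [Group G] (Pt : Type*) [MulAction G Pt] : Prop :=
  MulAction.IsPretransitive G Pt ∧
    ∀ s : Set Pt, MulAction.IsBlock G s → s.Subsingleton ∨ s = Set.univ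

/-- The number of blocks of `𝓑` through the point `x` (the replication number, for a
flag-transitive design). -/
noncomputable def repNum (𝓑 : Set (Set Pt)) (x : Pt) : ℕ :=
  Nat.card {B : Set Pt | B ∈ 𝓑 ∧ x ∈ B}

/-- The projective general linear group `PGL(2,K)`, as the quotient of `GL(2,K)` by its
center. -/
abbrev PGL2 (K : Type*) [Field K] :=
  GL (Fin 2) K ⧸ Subgroup.center (GL (Fin 2) K)

/-- The projective special linear group `PSL(2,K)`. -/
abbrev PSL2 (K : Type*) [Field K] := Matrix.ProjectiveSpecialLinearGroup (Fin 2) K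

end FT

open FT

open scoped MatrixGroups

namespace FT

section TwoByTwo

open Matrix.SpecialLinearGroup

lemma transvection_pow {ι R : Type*} [DecidableEq ι] [Fintype ι] [CommRing R] {i j : ι}
    (hij : i ≠ j) (b : R) (n : ℕ) :
    SpecialLinearGroup.transvection hij b ^ n = SpecialLinearGroup.transvection hij (n * b) := by
  induction n with
  | zero => simp
  | succ n ih => rw [pow_succ, ih, ← transvection_add, Nat.cast_succ, add_one_mul]

/-- The matrix `!![1, 1; 0, 1]`, the first of the two standard generators of `SL(2, ℤ / p)`. -/
abbrev upperTransvection (R : Type*) [CommRing R] : SL(2, R) :=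
  SpecialLinearGroup.transvection zero_ne_one 1

/-- The matrix `!![1, 0; 1, 1]`, the second of the two standard generators of `SL(2, ℤ / p)`. -/
abbrev lowerTransvection (R : Type*) [CommRing R] : SL(2, R) :=
  SpecialLinearGroup.transvection one_ne_zero 1

lemma closure_transvections_eq_top {F : Type*} [Field F]
    (hF : Function.Surjective (Nat.cast : ℕ → F)) :
    Subgroup.closure {upperTransvection F, lowerTransvection F} = ⊤ := by
  refine eq_top_iff.2 fun A _ => SL2.transvection_induction _ (fun i j hij c => ?_)
    (fun _ _ => mul_mem) A
  obtain ⟨n, rfl⟩ := hF c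
  rw [← mul_one (n : F), ← transvection_pow hij]
  refine pow_mem (Subgroup.subset_closure ?_) n
  fin_cases i <;> fin_cases j <;> first | exact absurd rfl hij | simp

lemma coe_upper_mul_lower_inv_mul_upper (R : Type*) [CommRing R] :
    (upperTransvection R * (lowerTransvection R)⁻¹ * upperTransvection R).1 = !![0, 1; -1, 0] := by
  ext i j
  fin_cases i <;> fin_cases j <;>
    simp [transvection_coe, adjugate_fin_two, mul_apply, Fin.sum_univ_two]

variable {R : Type*} [CommRing R]

lemma mul_self_fin_two (A : Matrix (Fin 2) (Fin 2) R) : A * A = A.trace • A - A.det • 1 := by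
  nontriviality R
  have h := aeval_self_charpoly A
  simp only [charpoly_fin_two, map_add, map_sub, map_mul, Polynomial.aeval_X,
    Polynomial.aeval_C, Algebra.algebraMap_eq_smul_one, smul_one_mul, sq] at h
  rw [← sub_eq_zero, ← h]
  abel

lemma mul_mul_self_of_det_eq_zero {N : Matrix (Fin 2) (Fin 2) R} (hN : N.det = 0)
    (M : Matrix (Fin 2) (Fin 2) R) : N * M * N = (N * M).trace • N := by
  rw [det_fin_two] at hN
  ext i j
  fin_cases i <;> fin_cases j <;>
    simp [mul_apply, trace_fin_two] <;> grind

section Reduced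

variable [IsReduced R]

lemma mul_self_eq_zero_of_isNilpotent {N : Matrix (Fin 2) (Fin 2) R}
    (hN : IsNilpotent N) : N * N = 0 := by
  have htrace : N.trace = 0 := (isNilpotent_trace_of_isNilpotent hN).eq_zero
  obtain ⟨n, hn⟩ := hN
  have hdet : IsNilpotent N.det := ⟨n + 1, by simp [← det_pow, pow_succ, hn]⟩
  rw [mul_self_fin_two, htrace, hdet.eq_zero, zero_smul, zero_smul, sub_zero]

lemma trace_eq_zero_of_mul_self_eq_zero {N : Matrix (Fin 2) (Fin 2) R} (hN : N * N = 0) :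
    N.trace = 0 :=
  (isNilpotent_trace_of_isNilpotent ⟨2, by rw [sq, hN]⟩).eq_zero

lemma trace_mul_inv_mul {A B : SL(2, R)} (hA : (A.1 - 1) * (A.1 - 1) = 0)
    (hB : (B.1 - 1) * (B.1 - 1) = 0) :
    (A * B⁻¹ * A).1.trace = 2 - 2 * ((A.1 - 1) * (B.1 - 1)).trace := by
  have htraceA := trace_eq_zero_of_mul_self_eq_zero hA
  have htraceB := trace_eq_zero_of_mul_self_eq_zero hB
  have hinv : (B⁻¹).1 = 1 - (B.1 - 1) := by
    refine left_inv_eq_right_inv (a := B.1) ?_ ?_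
    · rw [← coe_mul, inv_mul_cancel, coe_one]
    · rw [← sub_eq_zero, ← neg_eq_zero, ← hB]
      noncomm_ring
  have hsq : A.1 * A.1 = 1 + 2 • (A.1 - 1) := by
    rw [← sub_eq_zero, ← hA]
    noncomm_ring
  generalize A.1 - 1 = N at *
  generalize B.1 - 1 = M at *
  calc (A * B⁻¹ * A).1.trace = (A.1 * A.1 * (B⁻¹).1).trace := by
        rw [coe_mul, coe_mul, trace_mul_comm, ← mul_assoc]
    _ = ((1 + 2 • N) * (1 - M)).trace := by rw [hsq, hinv]
    _ = (1 : Matrix (Fin 2) (Fin 2) R).trace + 2 • N.trace - M.trace - 2 • (N * M).trace := by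
        rw [← trace_smul, ← trace_smul, ← trace_add, ← trace_sub, ← trace_sub]
        congr 1
        noncomm_ring
    _ = 2 - 2 * (N * M).trace := by simp [htraceA, htraceB]

end Reduced

variable {K : Type*} [Field K]

lemma exists_mul_eq_mul_single {N M : Matrix (Fin 2) (Fin 2) K} (hN : N * N = 0) (hM : M * M = 0)
    (h : (N * M).trace = 1) :
    ∃ g : GL (Fin 2) K, N * g.1 = g.1 * single 0 1 1 ∧ M * g.1 = g.1 * single 1 0 1 := by
  have hdet : N.det = 0 := by simpa using congr(det $hN)
  have hNMN : N * M * N = N := by rw [mul_mul_self_of_det_eq_zero hdet, h, one_smul]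
  obtain ⟨x, hx⟩ : ∃ x, N *ᵥ x ≠ 0 := by
    by_contra! hzero
    obtain rfl : N = 0 := mulVec_injective (funext fun x => by rw [hzero, zero_mulVec])
    simp at h
  set y := N *ᵥ x with hy
  set z := M *ᵥ y with hz
  have hNy : N *ᵥ y = 0 := by rw [hy, mulVec_mulVec, hN, zero_mulVec]
  have hNz : N *ᵥ z = y := by rw [hz, hy, mulVec_mulVec, mulVec_mulVec, hNMN]
  have hMz : M *ᵥ z = 0 := by rw [hz, mulVec_mulVec, hM, zero_mulVec]
  let g : Matrix (Fin 2) (Fin 2) K := (of ![y, z])ᵀ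
  have hg : g.det ≠ 0 := by
    intro hg
    obtain ⟨c, hc, hgc⟩ := exists_mulVec_eq_zero_iff.2 hg
    have hgc : c 0 • y + c 1 • z = 0 := by
      rw [← hgc]
      ext i
      simp [g, mulVec, dotProduct, mul_comm]
    have hc1 : c 1 = 0 := by
      simpa [mulVec_add, mulVec_smul, hNy, hNz, hx] using congr(N *ᵥ $hgc)
    have hc0 : c 0 = 0 := by simpa [hc1, hx] using hgc
    exact hc (funext (Fin.forall_fin_two.2 ⟨hc0, hc1⟩))
  refine ⟨GeneralLinearGroup.mkOfDetNeZero g hg, ?_, ?_⟩ <;> ext i j <;> fin_cases j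
  · exact (congrFun hNy i).trans (by simp [g, mul_apply])
  · exact (congrFun hNz i).trans (by simp [g, mul_apply])
  · exact (congrFun hz.symm i).trans (by simp [g, mul_apply])
  · exact (congrFun hMz i).trans (by simp [g, mul_apply])

lemma trace_eq_zero_of_mul_self_mem_center {S : SL(2, K)} (hS : S ∉ Subgroup.center SL(2, K))
    (hSS : S * S ∈ Subgroup.center SL(2, K)) : S.1.trace = 0 := by
  contrapose! hS
  obtain ⟨r, -, hr⟩ := mem_center_iff.1 hSS
  have hscalar : scalar (Fin 2) (S.1.trace⁻¹ * (r + 1)) = S.1 := by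
    rw [coe_mul, mul_self_fin_two, S.2, one_smul, eq_sub_iff_add_eq, ← map_one (scalar (Fin 2)),
      ← map_add] at hr
    rw [map_mul, hr, scalar_apply, ← smul_eq_diagonal_mul, smul_smul, inv_mul_cancel₀ hS, one_smul]
  refine mem_center_iff.2 ⟨_, ?_, hscalar⟩
  simpa using congr(det $hscalar)

end TwoByTwo

section Automorphisms

open Matrix.SpecialLinearGroup Matrix.ProjGenLinGroup Matrix.ProjectiveSpecialLinearGroup

lemma pow_card_eq_one_of_mem_center {n R : Type*} [DecidableEq n] [Fintype n] [CommRing R]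
    {C : SpecialLinearGroup n R} (hC : C ∈ Subgroup.center (SpecialLinearGroup n R)) :
    C ^ Fintype.card n = 1 := by
  obtain ⟨r, hr, hrC⟩ := mem_center_iff.1 hC
  exact Subtype.ext (by rw [coe_pow, ← hrC, ← map_pow, hr, map_one, coe_one])

lemma toPGL_eq_conj {n R : Type*} [DecidableEq n] [Fintype n] [CommRing R]
    {A B : SpecialLinearGroup n R} {g : GL n R} (h : A.1 * g.1 = g.1 * B.1) :
    toPGL A = ProjGenLinGroup.mk g * toPGL B * (ProjGenLinGroup.mk g)⁻¹ := by
  rw [eq_mul_inv_iff_mul_eq, SpecialLinearGroup.toPGL, MonoidHom.comp_apply, MonoidHom.comp_apply,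
    ← map_mul, ← map_mul]
  exact congrArg ProjGenLinGroup.mk (Units.ext h)

variable {F : Type*} [Field F]

/- A lift `A` of `x` only satisfies `A ^ p = ±1`; as `p + 1` is even, `A ^ (p + 1)` is again a lift
of `x`, and its `p`-th power is `1`. -/
lemma exists_unipotent_lift {p : ℕ} [Fact p.Prime] [CharP F p] (hp : Odd p) {x : PSL2 F}
    (hx : x ^ p = 1) :
    ∃ A : SL(2, F), (A : PSL2 F) = x ∧ (A.1 - 1) * (A.1 - 1) = 0 := by
  induction x using QuotientGroup.induction_on with | H A => ?_
  have hcenter : A ^ p ∈ Subgroup.center SL(2, F) := (QuotientGroup.eq_one_iff _).1 hx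
  have hpow : (A ^ (p + 1)) ^ p = 1 := by
    obtain ⟨m, hm⟩ := hp.add_one
    rw [← pow_mul, mul_comm, pow_mul, hm, ← two_mul, pow_mul,
      show (A ^ p) ^ 2 = 1 from pow_card_eq_one_of_mem_center hcenter, one_pow]
  refine ⟨A ^ (p + 1), ?_, mul_self_eq_zero_of_isNilpotent ⟨p, ?_⟩⟩
  · rw [QuotientGroup.mk_pow, pow_succ, hx, one_mul]
  · rw [sub_pow_char_of_commute p (Commute.one_right _), one_pow, ← coe_pow, hpow, coe_one,
      sub_self]

lemma upper_mul_lower_inv_mul_upper_notMem_center :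
    upperTransvection F * (lowerTransvection F)⁻¹ * upperTransvection F ∉
      Subgroup.center SL(2, F) := by
  rw [mem_center_iff, coe_upper_mul_lower_inv_mul_upper]
  rintro ⟨r, -, hr⟩
  simpa using congr($hr 0 1)

lemma mul_self_upper_mul_lower_inv_mul_upper_mem_center :
    (upperTransvection F * (lowerTransvection F)⁻¹ * upperTransvection F) *
      (upperTransvection F * (lowerTransvection F)⁻¹ * upperTransvection F) ∈
      Subgroup.center SL(2, F) := by
  rw [mem_center_iff, coe_mul, coe_upper_mul_lower_inv_mul_upper]
  refine ⟨-1, by simp, ?_⟩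
  simp [← smul_one_eq_diagonal, one_fin_two]

/- The Weyl element `u w⁻¹ u` is an involution of `PSL(2, F)`, hence so is its image; an involution
has trace zero, and this trace is `2 - 2 tr (N M)` where `1 + N` and `1 + M` are the lifts of the
images of `u` and `w`. -/
lemma exists_unipotent_lifts {p : ℕ} [Fact p.Prime] [CharP F p] (hp : Odd p)
    (σ : MulAut (PSL2 F)) :
    ∃ A B : SL(2, F), A = σ (upperTransvection F) ∧ B = σ (lowerTransvection F) ∧
      (A.1 - 1) * (A.1 - 1) = 0 ∧ (B.1 - 1) * (B.1 - 1) = 0 ∧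
      ((A.1 - 1) * (B.1 - 1)).trace = 1 := by
  have hlift : ∀ {i j : Fin 2} (hij : i ≠ j), ∃ A : SL(2, F),
      (A : PSL2 F) = σ (SpecialLinearGroup.transvection hij 1 : SL(2, F)) ∧
        (A.1 - 1) * (A.1 - 1) = 0 := fun hij =>
    exists_unipotent_lift hp <| by
      rw [← map_pow, ← QuotientGroup.mk_pow, transvection_pow hij, mul_one, CharP.cast_eq_zero,
        transvection_coeff_zero, QuotientGroup.mk_one, map_one]
  obtain ⟨A, hA, hN⟩ := hlift zero_ne_one
  obtain ⟨B, hB, hM⟩ := hlift one_ne_zero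
  refine ⟨A, B, hA, hB, hN, hM, ?_⟩
  have hAB : ((A * B⁻¹ * A : SL(2, F)) : PSL2 F) =
      σ (upperTransvection F * (lowerTransvection F)⁻¹ * upperTransvection F : SL(2, F)) := by
    simp only [QuotientGroup.mk_mul, QuotientGroup.mk_inv, hA, hB, map_mul, map_inv]
  have htrace : (A * B⁻¹ * A).1.trace = 0 := by
    refine trace_eq_zero_of_mul_self_mem_center ?_ ?_ <;>
      rw [← QuotientGroup.eq_one_iff]
    · rw [hAB, MulEquiv.map_eq_one_iff, QuotientGroup.eq_one_iff]
      exact upper_mul_lower_inv_mul_upper_notMem_center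
    · rw [QuotientGroup.mk_mul, hAB, ← map_mul, ← QuotientGroup.mk_mul, MulEquiv.map_eq_one_iff,
        QuotientGroup.eq_one_iff]
      exact mul_self_upper_mul_lower_inv_mul_upper_mem_center
  have h2 : (2 : F) ≠ 0 := Ring.two_ne_zero <| by
    rw [ringChar.eq F p]
    rintro rfl
    exact absurd hp (by decide)
  rw [trace_mul_inv_mul hN hM] at htrace
  exact mul_left_cancel₀ h2 (by linear_combination -htrace)

lemma exists_toPGL_transvection_eq_conj {p : ℕ} [Fact p.Prime] [CharP F p] (hp : Odd p)
    (σ : MulAut (PSL2 F)) :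
    ∃ g : PGL(2, F), ∀ t ∈ ({upperTransvection F, lowerTransvection F} : Set SL(2, F)),
      ProjectiveSpecialLinearGroup.toPGL (σ t) = g * toPGL t * g⁻¹ := by
  obtain ⟨A, B, hA, hB, hN, hM, hNM⟩ := exists_unipotent_lifts hp σ
  obtain ⟨g, hNg, hMg⟩ := exists_mul_eq_mul_single hN hM hNM
  refine ⟨ProjGenLinGroup.mk g, ?_⟩
  rintro t (rfl | rfl)
  · rw [← hA]
    exact toPGL_eq_conj (by rw [transvection_coe, mul_add, mul_one, ← hNg]; noncomm_ring)
  · rw [← hB]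
    exact toPGL_eq_conj (by rw [transvection_coe, mul_add, mul_one, ← hMg]; noncomm_ring)

variable [Fintype F] {p : ℕ}

lemma natCast_surjective_of_card_prime (hp : p.Prime) (hF : Fintype.card F = p) :
    Function.Surjective (Nat.cast : ℕ → F) := by
  have : Fact p.Prime := ⟨hp⟩
  intro x
  obtain ⟨z, rfl⟩ := (ZMod.ringEquivOfPrime F hp hF).surjective x
  exact ⟨z.val, by rw [← map_natCast (ZMod.ringEquivOfPrime F hp hF), ZMod.natCast_zmod_val]⟩

lemma exists_toPGL_eq_conj (hp : p.Prime) (hp2 : p ≠ 2) (hF : Fintype.card F = p)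
    (σ : MulAut (PSL2 F)) :
    ∃ g : PGL(2, F), ∀ x : PSL2 F, ProjectiveSpecialLinearGroup.toPGL (σ x) =
      g * ProjectiveSpecialLinearGroup.toPGL x * g⁻¹ := by
  have : Fact p.Prime := ⟨hp⟩
  have : CharP F p := charP_of_card_eq_prime hF
  obtain ⟨g, hg⟩ := exists_toPGL_transvection_eq_conj (hp.odd_of_ne_two hp2) σ
  refine ⟨g, fun x => ?_⟩
  induction x using QuotientGroup.induction_on with | H A => ?_
  have heq : (ProjectiveSpecialLinearGroup.toPGL.comp σ.toMonoidHom).comp (QuotientGroup.mk' _) =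
      (MulAut.conj g).toMonoidHom.comp SpecialLinearGroup.toPGL :=
    MonoidHom.eq_of_eqOn_dense
      (closure_transvections_eq_top (natCast_surjective_of_card_prime hp hF)) hg
  exact DFunLike.congr_fun heq A

lemma card_mulAut_PSL2_le (hp : p.Prime) (hp2 : p ≠ 2) (hF : Fintype.card F = p) :
    Nat.card (MulAut (PSL2 F)) ≤ Nat.card PGL(2, F) := by
  have : Finite PGL(2, F) := Finite.of_surjective _ ProjGenLinGroup.mk_surjective
  choose g hg using exists_toPGL_eq_conj hp hp2 hF
  refine Nat.card_le_card_of_injective g fun σ τ hστ => MulEquiv.ext fun x => ?_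
  exact ProjectiveSpecialLinearGroup.toPGL_injective (by rw [hg, hg, hστ])

end Automorphisms

section Orders

lemma card_GL_eq_card_SL_mul (n R : Type*) [DecidableEq n] [Fintype n] [Nonempty n] [CommRing R] :
    Nat.card (GL n R) = Nat.card (SpecialLinearGroup n R) * Nat.card Rˣ := by
  have hker : Nat.card (GeneralLinearGroup.det : GL n R →* Rˣ).ker =
      Nat.card (SpecialLinearGroup n R) := by
    rw [← Nat.card_range_of_injective SpecialLinearGroup.toGL_injective,
      SpecialLinearGroup.range_toGL]
    rfl
  rw [← Subgroup.card_mul_index (GeneralLinearGroup.det : GL n R →* Rˣ).ker, hker,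
    Subgroup.index_ker, MonoidHom.range_eq_top.2 GeneralLinearGroup.det_surjective,
    Subgroup.card_top]

lemma card_GL_eq_card_PGL_mul (n R : Type*) [DecidableEq n] [Fintype n] [Nonempty n] [CommRing R] :
    Nat.card (GL n R) = Nat.card PGL(n, R) * Nat.card Rˣ := by
  have hscalar : Function.Injective (GeneralLinearGroup.scalar n : Rˣ →* GL n R) := fun u v huv =>
    Units.ext (Matrix.scalar_inj.1 (congrArg Units.val huv))
  rw [← Nat.card_range_of_injective hscalar, ← MonoidHom.coe_range,
    ← GeneralLinearGroup.center_eq_range_scalar]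
  exact Subgroup.card_eq_card_quotient_mul_card_subgroup _

lemma card_PGL_eq_card_SL (n R : Type*) [DecidableEq n] [Fintype n] [Nonempty n] [CommRing R]
    [Finite Rˣ] : Nat.card PGL(n, R) = Nat.card (SpecialLinearGroup n R) :=
  Nat.eq_of_mul_eq_mul_right Nat.card_pos
    ((card_GL_eq_card_PGL_mul n R).symm.trans (card_GL_eq_card_SL_mul n R))

variable (F : Type*) [Field F]

lemma card_SL_two_eq_two_mul_card_PSL2 (h2 : ringChar F ≠ 2) :
    Nat.card SL(2, F) = 2 * Nat.card (PSL2 F) := by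
  have hcenter : Nat.card (Subgroup.center SL(2, F)) = 2 := by
    rw [Nat.card_congr (SpecialLinearGroup.center_equiv_rootsOfUnity' (0 : Fin 2)).toEquiv]
    exact (IsPrimitiveRoot.neg_one (ringChar F) h2).card_rootsOfUnity
  rw [Subgroup.card_eq_card_quotient_mul_card_subgroup (Subgroup.center SL(2, F)), hcenter,
    mul_comm]

lemma card_SL_two [Fintype F] :
    Nat.card SL(2, F) = Fintype.card F * (Fintype.card F ^ 2 - 1) := by
  classical
  have hpos : 0 < Fintype.card F - 1 := Nat.sub_pos_of_lt Fintype.one_lt_card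
  refine Nat.eq_of_mul_eq_mul_right hpos ?_
  rw [← Fintype.card_units, ← Nat.card_eq_fintype_card (α := Fˣ), ← card_GL_eq_card_SL_mul,
    Matrix.card_GL_field, Nat.card_eq_fintype_card, Fintype.card_units, Fin.prod_univ_two,
    Fin.val_zero, Fin.val_one, pow_zero, pow_one, sq, ← Nat.mul_sub_one]
  ring

end Orders

section GroupActions

variable {G : Type*} [Group G] {X : Subgroup G}

lemma card_stabilizer_eq_index_mul {Pt : Type*} [MulAction G Pt] [Finite Pt]
    [MulAction.IsPretransitive X Pt] (α : Pt) :
    Nat.card (MulAction.stabilizer G α) = X.index * Nat.card (MulAction.stabilizer X α) := by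
  have : MulAction.IsPretransitive G Pt :=
    ⟨fun x y => (MulAction.exists_smul_eq X x y).imp' X.subtype fun _ => id⟩
  have := Nonempty.intro α
  refine Nat.eq_of_mul_eq_mul_right (Nat.card_pos (α := Pt)) ?_
  rw [← MulAction.index_stabilizer_of_transitive G α, Subgroup.card_mul_index,
    ← X.card_mul_index, ← Subgroup.card_mul_index (MulAction.stabilizer X α),
    MulAction.index_stabilizer_of_transitive, MulAction.index_stabilizer_of_transitive]
  ring

variable [X.Normal]

lemma conjNormal_injective (hX : Subgroup.centralizer (X : Set G) = ⊥) :
    Function.Injective (MulAut.conjNormal : G →* MulAut X) := by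
  refine (injective_iff_map_eq_one _).2 fun g hg => ?_
  rw [← Subgroup.mem_bot, ← hX, Subgroup.mem_centralizer_iff]
  intro x hx
  have hconj : g * x * g⁻¹ = x :=
    (MulAut.conjNormal_apply g ⟨x, hx⟩).symm.trans (congrArg Subtype.val (DFunLike.congr_fun hg _))
  exact (mul_inv_eq_iff_eq_mul.1 hconj).symm

lemma index_dvd_two_of_mulEquiv_PSL2 {F : Type*} [Field F] [Fintype F] {p : ℕ} (hp : p.Prime)
    (hp2 : p ≠ 2) (hF : Fintype.card F = p) (e : X ≃* PSL2 F)
    (hX : Subgroup.centralizer (X : Set G) = ⊥) : X.index ∣ 2 := by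
  have : Finite X := Finite.of_equiv _ e.toEquiv.symm
  have : Finite G := Finite.of_injective _ (conjNormal_injective hX)
  have : CharP F p := by have := Fact.mk hp; exact charP_of_card_eq_prime hF
  have hle : Nat.card X * X.index ≤ Nat.card X * 2 :=
    calc Nat.card X * X.index = Nat.card G := X.card_mul_index
      _ ≤ Nat.card (MulAut X) := Nat.card_le_card_of_injective _ (conjNormal_injective hX)
      _ = Nat.card (MulAut (PSL2 F)) := Nat.card_congr (MulAut.congr e).toEquiv
      _ ≤ Nat.card PGL(2, F) := card_mulAut_PSL2_le hp hp2 hF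
      _ = Nat.card (PSL2 F) * 2 := by
        rw [card_PGL_eq_card_SL, card_SL_two_eq_two_mul_card_PSL2 F (by rwa [ringChar.eq F p]),
          mul_comm]
      _ = Nat.card X * 2 := by rw [Nat.card_congr e.toEquiv]
  have hindex : X.index ≤ 2 := Nat.le_of_mul_le_mul_left hle Nat.card_pos
  have hpos : X.index ≠ 0 := Subgroup.index_ne_zero_of_finite
  interval_cases X.index <;> simp_all

end GroupActions

section Designs

variable {Pt : Type*} {𝓑 : Set (Set Pt)} {k lam r : ℕ}

lemma FlagTransitive.repNum_dvd_card_stabilizer {G : Type*} [Group G] [MulAction G Pt]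
    (hacts : ActsOn G 𝓑) (hflag : FlagTransitive G 𝓑) {B : Set Pt} (hB : B ∈ 𝓑) {α : Pt}
    (hα : α ∈ B) : repNum 𝓑 α ∣ Nat.card (MulAction.stabilizer G α) := by
  have horbit : {B : Set Pt | B ∈ 𝓑 ∧ α ∈ B} = MulAction.orbit (MulAction.stabilizer G α) B := by
    ext C
    constructor
    · rintro ⟨hC, hαC⟩
      obtain ⟨g, hgB, hgα⟩ := hflag B hB C hC α hα α hαC
      exact ⟨⟨g, hgα⟩, hgB⟩
    · rintro ⟨⟨g, hg⟩, rfl⟩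
      exact ⟨hacts g B hB, α, hα, hg⟩
  rw [repNum, horbit, Nat.card_congr (MulAction.orbitEquivQuotientStabilizer _ B)]
  exact Subgroup.index_dvd_card _

/-- The point-block incidence matrix of the family of subsets `𝓑`. -/
noncomputable def incMatrix (R : Type*) [Zero R] [One R] (𝓑 : Set (Set Pt)) : Matrix Pt 𝓑 R :=
  of fun x B => Set.indicator B.1 1 x

section IncidenceMatrix

lemma card_setOf_mem_and [Fintype 𝓑] (P : Set Pt → Prop) [DecidablePred P] :
    Nat.card {B : Set Pt | B ∈ 𝓑 ∧ P B} = Finset.card {B : 𝓑 | P B} := by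
  rw [← Fintype.card_subtype, ← Nat.card_eq_fintype_card]
  exact Nat.card_congr (Equiv.subtypeSubtypeEquivSubtypeInter (· ∈ 𝓑) P).symm

variable {R : Type*} [NonAssocSemiring R]

lemma incMatrix_mulVec_one [Fintype 𝓑] (x : Pt) : (incMatrix R 𝓑 *ᵥ 1) x = repNum 𝓑 x := by
  classical
  rw [repNum, card_setOf_mem_and]
  simp [incMatrix, mulVec, dotProduct, Set.indicator_apply]

lemma one_vecMul_incMatrix [Fintype Pt] (B : 𝓑) : (1 ᵥ* incMatrix R 𝓑) B = Nat.card B.1 := by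
  classical
  simp [incMatrix, vecMul, dotProduct, Set.indicator_apply, Fintype.card_subtype]

lemma incMatrix_mul_transpose_apply [Fintype 𝓑] (x y : Pt) :
    (incMatrix R 𝓑 * (incMatrix R 𝓑)ᵀ) x y = Nat.card {B : Set Pt | B ∈ 𝓑 ∧ x ∈ B ∧ y ∈ B} := by
  classical
  rw [card_setOf_mem_and]
  simp [incMatrix, mul_apply, Set.indicator_apply, ← ite_and, and_comm]

end IncidenceMatrix

section Counting

lemma IsDesign.incMatrix_mul_transpose [Fintype 𝓑] [DecidableEq Pt] {R : Type*} [Ring R]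
    (hD : IsDesign 𝓑 k lam) (hr : ∀ x, repNum 𝓑 x = r) :
    incMatrix R 𝓑 * (incMatrix R 𝓑)ᵀ = ((r : R) - lam) • 1 + of fun _ _ => (lam : R) := by
  ext x y
  rw [incMatrix_mul_transpose_apply]
  obtain rfl | hxy := eq_or_ne x y
  · simp [← hr x, repNum]
  · rw [hD.pair_count x y hxy]
    simp [hxy]

variable [Finite Pt]

lemma IsDesign.card_mul_repNum (hD : IsDesign 𝓑 k lam) (hr : ∀ x, repNum 𝓑 x = r) :
    Nat.card Pt * r = Nat.card 𝓑 * k := by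
  classical
  have := Fintype.ofFinite Pt
  have := Fintype.ofFinite 𝓑
  have hrow : incMatrix ℕ 𝓑 *ᵥ 1 = r • 1 := funext fun x => by simp [incMatrix_mulVec_one, hr]
  have hcol : 1 ᵥ* incMatrix ℕ 𝓑 = k • 1 := funext fun B => by
    rw [one_vecMul_incMatrix, hD.block_card B B.2]
    simp
  have h := dotProduct_mulVec 1 (incMatrix ℕ 𝓑) 1
  rw [hrow, hcol, dotProduct_smul, smul_dotProduct, one_dotProduct_one, one_dotProduct_one] at h
  simpa [mul_comm] using h

lemma IsDesign.repNum_mul_add [Nonempty Pt] (hD : IsDesign 𝓑 k lam)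
    (hr : ∀ x, repNum 𝓑 x = r) :
    r * k + lam = r + lam * Nat.card Pt := by
  classical
  have := Fintype.ofFinite Pt
  have := Fintype.ofFinite 𝓑
  obtain ⟨x⟩ := ‹Nonempty Pt›
  have hcol : (incMatrix ℤ 𝓑)ᵀ *ᵥ 1 = k • 1 := funext fun B => by
    rw [mulVec_transpose, one_vecMul_incMatrix, hD.block_card B B.2]
    simp
  have hleft : ((incMatrix ℤ 𝓑 * (incMatrix ℤ 𝓑)ᵀ) *ᵥ 1) x = k * r := by
    rw [← mulVec_mulVec, hcol, mulVec_smul, Pi.smul_apply, incMatrix_mulVec_one, hr, nsmul_eq_mul]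
  have hright : ((((r : ℤ) - lam) • (1 : Matrix Pt Pt ℤ) + of fun _ _ : Pt => (lam : ℤ)) *ᵥ 1) x =
      r - lam + lam * Nat.card Pt := by
    rw [add_mulVec, smul_mulVec, one_mulVec]
    simp [mulVec, dotProduct, mul_comm]
  rw [hD.incMatrix_mul_transpose hr, hright] at hleft
  zify
  linear_combination -hleft

lemma IsDesign.lt_repNum [Nonempty Pt] (hD : IsDesign 𝓑 k lam) (hr : ∀ x, repNum 𝓑 x = r)
    (hlam : 0 < lam) (hk : 0 < k) (hkv : k < Nat.card Pt) : lam < r := by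
  have h := hD.repNum_mul_add hr
  by_contra! hle
  obtain ⟨m, rfl⟩ := Nat.exists_eq_add_of_le' hk
  nlinarith [Nat.mul_le_mul_right m hle, Nat.mul_lt_mul_of_pos_left hkv hlam]

lemma IsDesign.card_le_card (hD : IsDesign 𝓑 k lam) (hr : ∀ x, repNum 𝓑 x = r) (hlam : lam < r) :
    Nat.card Pt ≤ Nat.card 𝓑 := by
  classical
  have := Fintype.ofFinite Pt
  have := Fintype.ofFinite 𝓑
  have hpos : (incMatrix ℝ 𝓑 * (incMatrix ℝ 𝓑)ᵀ).PosDef := by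
    have hones : (of fun _ _ : Pt => (lam : ℝ)) = (lam : ℝ) • vecMulVec 1 (star 1) := by
      ext
      simp [vecMulVec]
    rw [hD.incMatrix_mul_transpose hr, hones]
    exact (PosDef.one.smul (sub_pos.2 (Nat.cast_lt.2 hlam))).add_posSemidef
      ((posSemidef_vecMulVec_self_star 1).smul (Nat.cast_nonneg lam))
  rw [Nat.card_eq_fintype_card, Nat.card_eq_fintype_card, ← rank_of_isUnit _ hpos.isUnit]
  exact (rank_mul_le_left _ _).trans (rank_le_card_width _)

lemma IsDesign.le_repNum [Nonempty Pt] (hD : IsDesign 𝓑 k lam) (hr : ∀ x, repNum 𝓑 x = r)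
    (hlam : lam < r) : k ≤ r := by
  refine Nat.le_of_mul_le_mul_left ?_ (Nat.card_pos (α := Pt))
  rw [hD.card_mul_repNum hr]
  exact Nat.mul_le_mul_right k (hD.card_le_card hr hlam)

variable (Pt k) in
lemma ncard_setOf_card_eq : {B : Set Pt | Nat.card B = k}.ncard = (Nat.card Pt).choose k := by
  have := Fintype.ofFinite Pt
  have himage : {B : Set Pt | Nat.card B = k} =
      (↑) '' (Finset.powersetCard k (Finset.univ : Finset Pt) : Set (Finset Pt)) := by
    ext B
    refine ⟨fun hB => ⟨B.toFinite.toFinset, ?_, B.toFinite.coe_toFinset⟩, ?_⟩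
    · simpa [← Set.ncard_eq_toFinset_card B] using hB
    · rintro ⟨s, hs, rfl⟩
      simpa using hs
  rw [himage, Set.ncard_image_of_injective _ Finset.coe_injective, Set.ncard_coe_finset,
    Finset.card_powersetCard, Finset.card_univ, Nat.card_eq_fintype_card]

lemma IsDesign.mem_iff_of_card_eq_choose (hD : IsDesign 𝓑 k lam)
    (hcard : Nat.card 𝓑 = (Nat.card Pt).choose k) (B : Set Pt) : B ∈ 𝓑 ↔ Nat.card B = k := by
  have heq : 𝓑 = {B : Set Pt | Nat.card B = k} :=
    Set.eq_of_subset_of_ncard_le hD.block_card ((ncard_setOf_card_eq Pt k).trans hcard.symm).le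
  exact Set.ext_iff.1 heq B

end Counting

end Designs

section Parameters

lemma card_eq_of_card_stabilizer_eq_twelve {F : Type*} [Field F] [Fintype F] {p : ℕ}
    (hp : p.Prime) (hp2 : p ≠ 2) (hF : Fintype.card F = p) {X Pt : Type*} [Group X]
    [MulAction X Pt] [MulAction.IsPretransitive X Pt] (e : X ≃* PSL2 F) {α : Pt}
    (hα : Nat.card (MulAction.stabilizer X α) = 12) :
    24 * Nat.card Pt = p * (p ^ 2 - 1) := by
  have : CharP F p := by have := Fact.mk hp; exact charP_of_card_eq_prime hF
  calc 24 * Nat.card Pt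
      = 2 * (Nat.card (MulAction.stabilizer X α) * (MulAction.stabilizer X α).index) := by
        rw [hα, MulAction.index_stabilizer_of_transitive]
        ring
    _ = 2 * Nat.card (PSL2 F) := by rw [Subgroup.card_mul_index, Nat.card_congr e.toEquiv]
    _ = p * (p ^ 2 - 1) := by
        rw [← card_SL_two_eq_two_mul_card_PSL2 F (by rwa [ringChar.eq F p]), card_SL_two, hF]

lemma parameters_eq {p v k r : ℕ} (hp : p.Prime) (hp2 : p ≠ 2) (hv : 24 * v = p * (p ^ 2 - 1))
    (hr : r ∣ 24) (hrk : r * k + 3 = r + 3 * v) (hkr : k ≤ r) (hk : 2 < k) (hkv : k < v - 1) :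
    p = 5 ∧ v = 5 ∧ k = 3 ∧ r = 6 := by
  have hr24 : r ≤ 24 := Nat.le_of_dvd (by decide) hr
  -- `3 * (v - 1) = r * (k - 1) ≤ 24 * 23`
  have hv185 : v ≤ 185 := by nlinarith [Nat.mul_le_mul_left r hkr]
  have hp16 : p ≤ 16 := by
    by_contra! hp17
    have : 17 * (17 ^ 2 - 1) ≤ p * (p ^ 2 - 1) := by gcongr <;> omega
    omega
  interval_cases p <;> first | (exfalso; revert hp; decide) | skip
  all_goals interval_cases r <;> omega

end Parameters

end FT

theorem stmt_12_general {p : ℕ} (hp : p.Prime) (hp2 : p ≠ 2)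
    {F : Type*} [Field F] [Fintype F] (hF : Fintype.card F = p)
    {Pt : Type*} {G : Type*} [Group G] [MulAction G Pt]
    {𝓑 : Set (Set Pt)} {k r : ℕ} (hD : IsDesign 𝓑 k 3) (hk : 2 < k) (hkv : k < Nat.card Pt - 1)
    (hr : ∀ x : Pt, repNum 𝓑 x = r) (hacts : ActsOn G 𝓑) (hflag : FlagTransitive G 𝓑)
    {X : Subgroup G} [X.Normal] (e : X ≃* PSL2 F) (hX : Subgroup.centralizer (X : Set G) = ⊥)
    [MulAction.IsPretransitive X Pt] {α : Pt} (hα : Nat.card (MulAction.stabilizer X α) = 12) :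
    p = 5 ∧ Nat.card Pt = 5 ∧ Nat.card 𝓑 = 10 ∧ r = 6 ∧ k = 3 ∧
      ∃ e : Pt ≃ Fin 5, ∀ B : Set Pt, B ∈ 𝓑 ↔ e '' B ∈ {C : Set (Fin 5) | Nat.card C = 3} := by
  have : Finite Pt := Nat.finite_of_card_ne_zero (by omega)
  have : Nonempty Pt := ⟨α⟩
  have hlt : 3 < r := hD.lt_repNum hr (by decide) (by omega) (by omega)
  have hr24 : r ∣ 24 := by
    have hrpos : 0 < repNum 𝓑 α := by rw [hr]; omega
    obtain ⟨⟨B, hB, hαB⟩⟩ := (Nat.card_pos_iff.1 hrpos).1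
    calc r = repNum 𝓑 α := (hr α).symm
      _ ∣ Nat.card (MulAction.stabilizer G α) := hflag.repNum_dvd_card_stabilizer hacts hB hαB
      _ = X.index * 12 := by rw [card_stabilizer_eq_index_mul (X := X), hα]
      _ ∣ 24 := mul_dvd_mul_right (index_dvd_two_of_mulEquiv_PSL2 hp hp2 hF e hX) 12
  obtain ⟨hp5, hv, rfl, rfl⟩ := parameters_eq hp hp2
    (card_eq_of_card_stabilizer_eq_twelve hp hp2 hF e hα) hr24 (hD.repNum_mul_add hr)
    (hD.le_repNum hr hlt) hk hkv
  have hb : Nat.card 𝓑 = 10 := by have := hD.card_mul_repNum hr; omega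
  refine ⟨hp5, hv, hb, rfl, rfl, Finite.equivFinOfCardEq hv, fun B => ?_⟩
  rw [hD.mem_iff_of_card_eq_choose (by rw [hb, hv]; rfl), Set.mem_ofPred_eq,
    Nat.card_image_of_injective (Equiv.injective _)]

/-- In the setting of a non-trivial, non-symmetric flag-transitive,
point-primitive `2-(v,k,3)` design with `3 ∣ r`, almost simple automorphism group `G` with
socle `X ≅ PSL(2,q)` acting point-primitively with maximal point stabilizer `X_α`:
if `X_α ≅ A₄` with `q = p ≡ ±3 (mod 8)` prime and `p ≢ ±1 (mod 10)`, then `q = 5` and `D`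
is the complete `2-(5,3,3)` design, with `(v,b,r,k) = (5,10,6,3)`. -/
theorem stmt_12
    (q : ℕ) (hq4 : 4 ≤ q)
    (F : Type) [Field F] [Fintype F] (hF : Fintype.card F = q)
    {Pt : Type*} [Fintype Pt] {G : Type*} [Group G] [MulAction G Pt] [FaithfulSMul G Pt]
    -- `D = (Pt, 𝓑)` is a non-trivial, non-symmetric `2-(v,k,3)` design …
    (𝓑 : Set (Set Pt)) (v k : ℕ) (hv : Nat.card Pt = v)
    (hD : IsDesign 𝓑 k 3) (hnt : 2 < k ∧ k < v - 1)
    (hnonsym : Nat.card 𝓑 ≠ v)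
    -- … whose replication number `r` is divisible by 3, …
    (r : ℕ) (hr : ∀ x : Pt, repNum 𝓑 x = r) (h3r : 3 ∣ r)
    -- … admitting the flag-transitive, point-primitive automorphism group `G`, …
    (hacts : ActsOn G 𝓑) (hflag : FlagTransitive G 𝓑)
    (hprim : PointPrimitive G Pt)
    -- … where `G` is almost simple with socle `X ≅ PSL(2,q)` (so `PSL(2,q) ⊴ G ≤ PΓL(2,q)`):
    (X : Subgroup G) (hXnormal : X.Normal)
    (hXiso : Nonempty (X ≃* PSL2 F))
    (hXcent : Subgroup.centralizer (X : Set G) = ⊥)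
    -- `X` acts point-primitively on `D`, with maximal point stabilizer `X_α`:
    (hXprim : PointPrimitive X Pt)
    (α : Pt) (hmax : IsCoatom (MulAction.stabilizer X α))
    -- `X_α ≅ A₄`, with `q = p` a prime, `p ≡ ±3 (mod 8)` and `p ≢ ±1 (mod 10)`:
    (p : ℕ) (hp : p.Prime) (hqp : q = p)
    (hp8 : p % 8 = 3 ∨ p % 8 = 5)
    (hp10 : p % 10 ≠ 1 ∧ p % 10 ≠ 9)
    (hA4 : Nonempty ((MulAction.stabilizer X α) ≃* alternatingGroup (Fin 4)))
    :
    q = 5 ∧ Nat.card Pt = 5 ∧ Nat.card 𝓑 = 10 ∧ r = 6 ∧ k = 3 ∧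
    -- `D` is the complete `2-(5,3,3)` design: the blocks are all `3`-subsets of a `5`-set
    ∃ e : Pt ≃ Fin 5, ∀ B : Set Pt,
      B ∈ 𝓑 ↔ (e '' B) ∈ {C : Set (Fin 5) | Nat.card C = 3} := by
  subst hv hqp
  have hX := hXprim.1
  have hα : Nat.card (MulAction.stabilizer X α) = 12 := by
    rw [Nat.card_congr hA4.some.toEquiv, nat_card_alternatingGroup, Nat.card_fin]
    rfl
  exact stmt_12_general hp (by omega) hF hD hnt.1 hnt.2 hr hacts hflag hXiso.some hXcent hα
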